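/- Fix a positive integer n. There exists a constant c, depending only on n, such that every finite subgroup G of PGL_n(ℂ) contains a normal diagonalizable subgroup A ≤ G of index at most c. -/

import Mathlib

open Matrix

/-- The projective general linear group `PGL n K`, the quotient of `GL n K` by its
center (the nonzero scalar matrices). -/
abbrev PGL (n : ℕ) (K : Type*) [Field K] :=
  GL (Fin n) K ⧸ Subgroup.center (GL (Fin n) K)

/-- A subgroup `H` of `PGL n ℂ` is diagonalizable if its inverse image in
`GL n ℂ` is simultaneously diagonalizable: some `P ∈ GL n ℂ` conjugates every
element of the inverse image to a diagonal matrix. -/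
def IsDiagonalizableSubgroup {n : ℕ} (H : Subgroup (PGL n ℂ)) : Prop :=
  ∃ P : GL (Fin n) ℂ, ∀ g : GL (Fin n) ℂ,
    QuotientGroup.mk' (Subgroup.center (GL (Fin n) ℂ)) g ∈ H →
      Matrix.IsDiag ((P⁻¹ * g * P : GL (Fin n) ℂ) : Matrix (Fin n) (Fin n) ℂ)


lemma jordan_joint_diag (n : ℕ) {ι : Type*} (M : ι → Matrix (Fin n) (Fin n) ℂ)
    (hc : ∀ i j, Commute (M i) (M j)) (hf : ∀ i, ∃ k : ℕ, 0 < k ∧ M i ^ k = 1) :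
    ∃ (b : Module.Basis (Fin n) ℂ (Fin n → ℂ)) (χ : Fin n → ι → ℂ),
      ∀ i j, M i *ᵥ b j = χ j i • b j := by
  classical
  let f : ι → Module.End ℂ (Fin n → ℂ) := fun i => Matrix.toLinAlgEquiv' (M i)
  have hfc : ∀ i j, Commute (f i) (f j) := fun i j => (hc i j).map Matrix.toLinAlgEquiv'
  have hss : ∀ i, (f i).IsSemisimple := by
    intro i
    obtain ⟨k, hk, hM⟩ := hf i
    have hfk : f i ^ k = 1 := by
      simp only [f, ← map_pow, hM, map_one]
    refine Module.End.isSemisimple_of_squarefree_aeval_eq_zero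
      (p := (Polynomial.X ^ k - 1 : Polynomial ℂ)) ?_ ?_
    · have : (k : ℂ) ≠ 0 := by exact_mod_cast hk.ne'
      exact ((Polynomial.separable_X_pow_sub_C (F := ℂ) (n := k) 1 this one_ne_zero).squarefree)
    · simp [hfk]
  have hmax : ∀ i μ, (f i).maxGenEigenspace μ = (f i).eigenspace μ := fun i μ =>
    (hss i).isFinitelySemisimple.maxGenEigenspace_eq_eigenspace μ
  have htop := Module.End.iSup_iInf_maxGenEigenspace_eq_top_of_iSup_maxGenEigenspace_eq_top_of_commute
    f (fun i j _ => hfc i j) (fun i => Module.End.iSup_maxGenEigenspace_eq_top (f i))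
  have hind := Module.End.independent_iInf_maxGenEigenspace_of_forall_mapsTo f
    (fun i j φ => Module.End.mapsTo_maxGenEigenspace_of_comm (hfc j i) φ)
  have hint := DirectSum.isInternal_submodule_of_iSupIndep_of_iSup_eq_top hind htop
  let b0 := hint.collectedBasis (fun χ => Module.finBasis ℂ _)
  have : Finite (Σ χ : ι → ℂ, Fin (Module.finrank ℂ
    (⨅ i, (f i).maxGenEigenspace (χ i) : Submodule ℂ (Fin n → ℂ)))) := Module.Finite.finite_basis b0
  let e := b0.indexEquiv (Pi.basisFun ℂ (Fin n))
  refine ⟨b0.reindex e, fun j => (e.symm j).1, fun i j => ?_⟩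
  have h := hint.collectedBasis_mem (fun χ => Module.finBasis ℂ _) (e.symm j)
  rw [Submodule.mem_iInf] at h
  have h2 := h i
  rw [hmax, Module.End.mem_eigenspace_iff] at h2
  rw [Module.Basis.reindex_apply]
  exact h2

open scoped Matrix.Norms.L2Operator ComplexOrder in
lemma jordan_close_commute (n : ℕ) (g h : Matrix (Fin n) (Fin n) ℂ)
    (hg : gᴴ * g = 1) (hh : hᴴ * h = 1) (hfin : ∃ k : ℕ, 0 < k ∧ g ^ k = 1)
    (hn : ‖h - 1‖ < 1 / 2) (hc : Commute g (h * g * hᴴ)) : Commute g h := by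
  have hh' : h * hᴴ = 1 := mul_eq_one_comm.mp hh
  have key : g = h * g * hᴴ := by
    have hpow : ∀ k : ℕ, (h * g * hᴴ) ^ k = h * g ^ k * hᴴ := by
      intro k
      induction k with
      | zero => simp [hh']
      | succ k ih =>
        rw [pow_succ, ih, pow_succ]
        calc h * g ^ k * hᴴ * (h * g * hᴴ) = h * g ^ k * (hᴴ * h) * g * hᴴ := by
              simp only [mul_assoc]
          _ = _ := by rw [hh]; simp only [mul_assoc, mul_one]
    obtain ⟨b, χ, hb⟩ := jordan_joint_diag n (fun i : Bool => if i then g else h * g * hᴴ)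
      (by
        intro i j
        cases i <;> cases j
        · exact Commute.refl _
        · exact hc.symm
        · exact hc
        · exact Commute.refl _)
      (by
        obtain ⟨k, hk, hgk⟩ := hfin
        intro i
        refine ⟨k, hk, ?_⟩
        cases i
        · simp [hpow, hgk, hh']
        · simpa using hgk)
    apply Matrix.toLin'.injective
    refine b.ext fun j => ?_
    simp only [Matrix.toLin'_apply]
    have h1 : g *ᵥ b j = χ j true • b j := by simpa using hb true j
    have h2 : (h * g * hᴴ) *ᵥ b j = χ j false • b j := by simpa using hb false j
    rw [h1, h2]
    by_cases hx : χ j true = χ j false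
    · rw [hx]
    exfalso
    generalize χ j true = μ at *
    generalize χ j false = lam at *
    have hu0 := b.ne_zero j
    generalize b j = u at *
    set v := hᴴ *ᵥ u with hv
    have hhv : h *ᵥ v = u := by rw [hv, mulVec_mulVec, hh', one_mulVec]
    have hgv : g *ᵥ v = lam • v := by
      have : hᴴ *ᵥ ((h * g * hᴴ) *ᵥ u) = hᴴ *ᵥ (lam • u) := by rw [h2]
      rw [mulVec_mulVec, mulVec_smul, ← mul_assoc, ← mul_assoc, hh, one_mul, ← mulVec_mulVec] at this
      exact this
    have hv0 : v ≠ 0 := by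
      intro h0; rw [h0, mulVec_zero] at hhv; exact hu0 hhv.symm
    have iso : ∀ x y : Fin n → ℂ, star (g *ᵥ x) ⬝ᵥ (g *ᵥ y) = star x ⬝ᵥ y := by
      intro x y
      rw [star_mulVec, ← dotProduct_mulVec, mulVec_mulVec, hg, one_mulVec]
    have hvv : star v ⬝ᵥ v ≠ 0 := by
      rw [Ne, dotProduct_star_self_eq_zero]; exact hv0
    have e1 : star lam * lam = 1 := by
      have := iso v v
      rw [hgv, star_smul, smul_dotProduct, dotProduct_smul, smul_eq_mul, smul_eq_mul, ← mul_assoc] at this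
      exact mul_right_cancel₀ hvv (by rw [this, one_mul])
    have e2 : star v ⬝ᵥ u = 0 := by
      have := iso v u
      rw [hgv, h1, star_smul, smul_dotProduct, dotProduct_smul, smul_eq_mul, smul_eq_mul, ← mul_assoc] at this
      by_contra hne
      have e3 : star lam * μ = 1 := mul_right_cancel₀ hne (by rw [this, one_mul])
      have : star lam ≠ 0 := by rintro h0; rw [h0] at e1; simp at e1
      exact hx (mul_left_cancel₀ this (e3.trans e1.symm))
    let V : EuclideanSpace ℂ (Fin n) := WithLp.toLp 2 v
    let U : EuclideanSpace ℂ (Fin n) := WithLp.toLp 2 u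
    have i1 : inner ℂ V U = 0 := by
      rw [EuclideanSpace.inner_eq_star_dotProduct, dotProduct_comm]; exact e2
    have n1 : ‖U - V‖ ≤ ‖h - 1‖ * ‖V‖ := by
      have := Matrix.l2_opNorm_mulVec (h - 1) V
      convert this using 2
      ext i
      simp [V, U, sub_mulVec, hhv]
    have n2 : ‖V‖ ^ 2 ≤ ‖V‖ * ‖U - V‖ := by
      have : inner ℂ V (U - V) = - (‖V‖ : ℂ) ^ 2 := by
        rw [inner_sub_right, i1, inner_self_eq_norm_sq_to_K]; simp
      have h3 := norm_inner_le_norm (𝕜 := ℂ) V (U - V)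
      rw [this] at h3
      simpa using h3
    have hV : 0 < ‖V‖ := by
      rw [norm_pos_iff]; intro h0; apply hv0
      simpa [V] using h0
    nlinarith
  have : g * h = h * g := by
    conv_lhs => rw [key]
    rw [mul_assoc, hh, mul_one]
  exact this

open scoped Matrix.Norms.L2Operator in
lemma jordan_unitary (n : ℕ) : ∃ c : ℕ, ∀ (H : Type) [Group H] [Finite H]
    (ρ : H →* Matrix (Fin n) (Fin n) ℂ), Function.Injective ρ →
    (∀ h, (ρ h)ᴴ * ρ h = 1) →
    ∃ A : Subgroup H, A.Normal ∧ A.index ≤ c ∧ ∀ a ∈ A, ∀ b ∈ A, a * b = b * a := by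
  classical
  have hcomp : IsCompact (Metric.closedBall (0 : Matrix (Fin n) (Fin n) ℂ) 1) := by
    have : ProperSpace (Matrix (Fin n) (Fin n) ℂ) := FiniteDimensional.proper ℂ _
    exact isCompact_closedBall _ _
  obtain ⟨t, ht, hcover⟩ := Metric.totallyBounded_iff.mp hcomp.totallyBounded (1 / 4) (by norm_num)
  refine ⟨Nat.card t, ?_⟩
  intro H _ _ ρ hinj hu
  have : Finite t := ht
  have hmem : ∀ h, ρ h ∈ unitary (Matrix (Fin n) (Fin n) ℂ) := fun h =>
    ⟨hu h, mul_eq_one_comm.mp (hu h)⟩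
  have hinv : ∀ h, ρ h⁻¹ = (ρ h)ᴴ := by
    intro h
    have h1 : ρ h⁻¹ * ρ h = 1 := by rw [← map_mul]; simp
    calc ρ h⁻¹ = ρ h⁻¹ * (ρ h * (ρ h)ᴴ) := by rw [mul_eq_one_comm.mp (hu h), mul_one]
      _ = _ := by rw [← mul_assoc, h1, one_mul]
  have nl : ∀ h X, ‖ρ h * X‖ = ‖X‖ := fun h X => CStarRing.norm_mem_unitary_mul X (hmem h)
  have nr : ∀ h X, ‖X * ρ h‖ = ‖X‖ := fun h X => CStarRing.norm_mul_mem_unitary X (hmem h)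
  have hone : ∀ h, ‖ρ h‖ ≤ 1 := by
    intro h
    have h1 := nl h 1
    rw [mul_one] at h1
    rw [h1]
    rcases subsingleton_or_nontrivial (Matrix (Fin n) (Fin n) ℂ) with hs | hs
    · rw [Subsingleton.elim (1 : Matrix (Fin n) (Fin n) ℂ) 0]; simp
    · exact (CStarRing.norm_one).le
  let S : Set H := {h | ‖ρ h - 1‖ < 1 / 2}
  have hfin : ∀ h, ∃ k : ℕ, 0 < k ∧ ρ h ^ k = 1 := by
    intro h
    exact ⟨orderOf h, orderOf_pos h, by rw [← map_pow, pow_orderOf_eq_one, map_one]⟩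
  have hconj : ∀ g h, ‖ρ (g * h * g⁻¹) - 1‖ = ‖ρ h - 1‖ := by
    intro g h
    have : ρ (g * h * g⁻¹) - 1 = ρ g * (ρ h - 1) * ρ g⁻¹ := by
      rw [mul_sub, sub_mul, mul_one, ← map_mul, ← map_mul, ← map_mul]; simp
    rw [this, nr, nl]
  have hcommS : ∀ g ∈ S, ∀ h ∈ S, g * h = h * g := by
    intro g hg
    by_contra! hcon
    obtain ⟨h, ⟨hhS, hhc⟩, hmin⟩ := (Set.toFinite {h : H | h ∈ S ∧ g * h ≠ h * g}).exists_minimalFor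
      (fun h => ‖ρ h - 1‖) _ hcon
    have hpos : 0 < ‖ρ h - 1‖ := by
      rw [norm_pos_iff, sub_ne_zero]
      intro h1
      rw [← map_one ρ] at h1
      apply hhc
      rw [hinj h1]; simp
    let c := g * h * g⁻¹ * h⁻¹
    have hcn : ‖ρ c - 1‖ < ‖ρ h - 1‖ := by
      have e : ρ c - 1 = ((ρ g - 1) * (ρ h - 1) - (ρ h - 1) * (ρ g - 1)) * ρ (g⁻¹ * h⁻¹) := by
        have e1 : (ρ g - 1) * (ρ h - 1) - (ρ h - 1) * (ρ g - 1) = ρ (g * h) - ρ (h * g) := by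
          rw [map_mul, map_mul]; noncomm_ring
        rw [e1, sub_mul, ← map_mul, ← map_mul]
        congr 1
        · congr 1; simp only [c]; group
        · rw [← map_one ρ]; congr 1; group
      rw [e, nr]
      have h1 := norm_sub_le ((ρ g - 1) * (ρ h - 1)) ((ρ h - 1) * (ρ g - 1))
      have h2 := norm_mul_le (ρ g - 1) (ρ h - 1)
      have h3 := norm_mul_le (ρ h - 1) (ρ g - 1)
      have h4 : ‖ρ g - 1‖ < 1 / 2 := hg
      nlinarith
    have hcS : c ∈ S := lt_trans hcn hhS
    have hgc : g * c = c * g := by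
      by_contra hne
      have := hmin (j := c) ⟨hcS, hne⟩ hcn.le
      exact absurd this (not_le.mpr hcn)
    have hgk : Commute g (h * g * h⁻¹) := by
      have h1 : Commute g c := hgc
      have h2 : Commute g (c⁻¹ * g) := h1.inv_right.mul_right (Commute.refl g)
      convert h2 using 1
      simp only [c]; group
    have h3 : Commute (ρ g) (ρ h * ρ g * (ρ h)ᴴ) := by
      have := hgk.map ρ
      rwa [map_mul, map_mul, hinv] at this
    have h4 := jordan_close_commute n (ρ g) (ρ h) (hu g) (hu h) (hfin g) hhS h3
    apply hhc
    apply hinj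
    rw [map_mul, map_mul]; exact h4
  refine ⟨Subgroup.closure S, ?_, ?_, ?_⟩
  · have hS : Subgroup.normalizer S = ⊤ := by
      rw [Subgroup.eq_top_iff']
      intro g h
      simp only [S, Set.mem_ofPred_eq, hconj]
    rw [← Subgroup.normalizer_eq_top_iff, eq_top_iff, ← hS]
    exact Subgroup.normalizer_le_normalizer_closure S
  · have hc : ∀ h : H, ∃ y : t, ‖ρ h - y‖ < 1 / 4 := by
      intro h
      have : ρ h ∈ ⋃ y ∈ t, Metric.ball y (1 / 4) := hcover (by simpa using hone h)
      simp only [Set.mem_iUnion, Metric.mem_ball, dist_eq_norm] at this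
      obtain ⟨y, hy, h1⟩ := this
      exact ⟨⟨y, hy⟩, h1⟩
    choose F hF using hc
    rw [Subgroup.index]
    refine Nat.card_le_card_of_injective (fun q : H ⧸ Subgroup.closure S => F q.out) ?_
    intro q r hqr
    simp only at hqr
    rw [← q.out_eq', ← r.out_eq']
    rw [QuotientGroup.eq]
    apply Subgroup.subset_closure
    change ‖ρ (q.out⁻¹ * r.out) - 1‖ < 1 / 2
    have e : ρ (q.out⁻¹ * r.out) - 1 = ρ q.out⁻¹ * (ρ r.out - ρ q.out) := by
      rw [mul_sub, ← map_mul, ← map_mul]; simp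
    rw [e, nl]
    have h1 := hF q.out
    have h2 := hF r.out
    rw [hqr] at h1
    have h3 := norm_sub_le (ρ r.out - F r.out) (ρ q.out - F r.out)
    have e3 : (ρ r.out - F r.out) - (ρ q.out - F r.out) = ρ r.out - ρ q.out := by abel
    rw [e3] at h3
    linarith
  · intro a ha b hb
    have := Subgroup.isMulCommutative_closure hcommS
    exact setLike_mul_comm ha hb

open scoped Matrix.Norms.L2Operator ComplexOrder MatrixOrder in
lemma jordan_unitarize (n : ℕ) (H : Type) [Group H] [Finite H]
    (ρ : H →* Matrix (Fin n) (Fin n) ℂ) :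
    ∃ B : (Matrix (Fin n) (Fin n) ℂ)ˣ,
      ∀ h, (B.1 * ρ h * (B⁻¹).1)ᴴ * (B.1 * ρ h * (B⁻¹).1) = 1 := by
  classical
  have := Fintype.ofFinite H
  let S : Matrix (Fin n) (Fin n) ℂ := ∑ h : H, (ρ h)ᴴ * ρ h
  have hS : S.PosDef := by
    refine Matrix.posDef_sum ⟨1, Finset.mem_univ _⟩ (fun h _ => ?_)
    refine Matrix.PosDef.conjTranspose_mul_self _ ?_
    refine Function.LeftInverse.injective (g := (ρ h⁻¹).mulVec) fun x => ?_
    rw [mulVec_mulVec, ← map_mul]; simp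
  have hinv : ∀ g, (ρ g)ᴴ * S * ρ g = S := by
    intro g
    simp only [S, Finset.mul_sum, Finset.sum_mul]
    refine Fintype.sum_equiv (Equiv.mulRight g) _ _ fun h => ?_
    simp [mul_assoc]
  obtain ⟨B, hB, hSB⟩ := CStarAlgebra.isStrictlyPositive_iff_eq_star_mul_self.mp
    hS.isStrictlyPositive
  obtain ⟨B, rfl⟩ := hB
  refine ⟨B, fun h => ?_⟩
  rw [star_eq_conjTranspose] at hSB
  have h1 := hinv h
  rw [hSB] at h1
  have h2 : (B⁻¹).1ᴴ * B.1ᴴ = 1 := by rw [← conjTranspose_mul]; simp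
  calc (B.1 * ρ h * (B⁻¹).1)ᴴ * (B.1 * ρ h * (B⁻¹).1)
      = (B⁻¹).1ᴴ * ((ρ h)ᴴ * (B.1ᴴ * B.1) * ρ h) * (B⁻¹).1 := by
        simp only [conjTranspose_mul, mul_assoc]
    _ = ((B⁻¹).1ᴴ * B.1ᴴ) * (B.1 * (B⁻¹).1) := by rw [h1]; simp only [mul_assoc]
    _ = 1 := by rw [h2]; simp

lemma jordan_linear (n : ℕ) : ∃ c : ℕ, ∀ (H : Type) [Group H] [Finite H]
    (ρ : H →* Matrix (Fin n) (Fin n) ℂ), Function.Injective ρ →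
    ∃ A : Subgroup H, A.Normal ∧ A.index ≤ c ∧ ∀ a ∈ A, ∀ b ∈ A, a * b = b * a := by
  obtain ⟨c, hc⟩ := jordan_unitary n
  refine ⟨c, fun H _ _ ρ hinj => ?_⟩
  obtain ⟨B, hB⟩ := jordan_unitarize n H ρ
  let σ : H →* Matrix (Fin n) (Fin n) ℂ :=
    { toFun := fun h => B.1 * ρ h * (B⁻¹).1
      map_one' := by simp
      map_mul' := fun x y => by simp [mul_assoc] }
  refine hc H σ ?_ hB
  intro x y hxy
  apply hinj
  have h1 : B.1 * ρ x * (B⁻¹).1 = B.1 * ρ y * (B⁻¹).1 := hxy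
  exact B.mul_right_inj.mp ((B⁻¹).mul_left_inj.mp h1)

/-- for every `n > 0` there is a constant `c` such that every
finite subgroup `G` of `PGL n ℂ` has a normal, diagonalizable subgroup of index
at most `c`. -/
theorem exists_normal_diagonalizable_subgroup (n : ℕ) (hn : 0 < n) :
    ∃ c : ℕ, ∀ (G : Subgroup (PGL n ℂ)), Finite G →
      ∃ A : Subgroup G, A.Normal ∧ A.index ≤ c ∧
        IsDiagonalizableSubgroup (A.map G.subtype) := by
  classical
  obtain ⟨c, hc⟩ := jordan_linear n
  refine ⟨c, fun G hG => ?_⟩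
  have : NeZero n := ⟨hn.ne'⟩
  let π : GL (Fin n) ℂ →* PGL n ℂ := QuotientGroup.mk' (Subgroup.center (GL (Fin n) ℂ))
  let φ : SpecialLinearGroup (Fin n) ℂ →* PGL n ℂ := π.comp SpecialLinearGroup.toGL
  have hker : φ.ker = Subgroup.center (SpecialLinearGroup (Fin n) ℂ) :=
    SpecialLinearGroup.toPGL_ker
  have hkfin : Finite φ.ker := by
    rw [hker]
    have : NeZero (max (Fintype.card (Fin n)) 1) := ⟨by simp⟩
    exact Finite.of_equiv _ (SpecialLinearGroup.center_equiv_rootsOfUnity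
      (n := Fin n) (R := ℂ)).symm.toEquiv
  let K : Subgroup (SpecialLinearGroup (Fin n) ℂ) := G.comap φ
  have hKfin : Finite K := by
    have h1 : (φ ⁻¹' (G : Set (PGL n ℂ))).Finite := by
      refine Set.Finite.preimage' (Set.toFinite _) fun b _ => ?_
      by_cases hb : ∃ s, φ s = b
      · obtain ⟨s, rfl⟩ := hb
        refine ((Set.toFinite (φ.ker : Set _)).image (fun z => s * z)).subset ?_
        intro x hx
        refine ⟨s⁻¹ * x, ?_, by simp⟩
        have hx : φ x = φ s := hx
        simp [MonoidHom.mem_ker, hx]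
      · convert Set.finite_empty
        ext x
        simp only [Set.mem_preimage, Set.mem_singleton_iff, Set.mem_empty_iff_false, iff_false]
        exact fun h => hb ⟨x, h⟩
    exact h1
  let ρ : K →* Matrix (Fin n) (Fin n) ℂ :=
    { toFun := fun k => (k.1 : Matrix (Fin n) (Fin n) ℂ)
      map_one' := by simp
      map_mul' := fun x y => by simp }
  obtain ⟨A, hAn, hAi, hAc⟩ := hc K ρ (fun x y h => Subtype.ext (Subtype.ext h))
  let ψ : K →* G := (φ.comp K.subtype).codRestrict G (fun k => k.2)
  have hφs : Function.Surjective φ := by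
    intro q
    obtain ⟨g, rfl⟩ := QuotientGroup.mk'_surjective _ q
    obtain ⟨z, hz⟩ := IsAlgClosed.exists_pow_nat_eq (g.1.det)⁻¹ hn
    have hd : g.1.det ≠ 0 := g.det.ne_zero
    have hz0 : z ≠ 0 := by
      rintro rfl
      rw [zero_pow hn.ne'] at hz
      exact inv_ne_zero hd hz.symm
    let s : SpecialLinearGroup (Fin n) ℂ := ⟨z • g.1, by
      rw [det_smul, Fintype.card_fin, hz, inv_mul_cancel₀ hd]⟩
    refine ⟨s, ?_⟩
    refine ((QuotientGroup.mk'_eq_mk' _).mpr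
      ⟨GeneralLinearGroup.scalar (Fin n) (Units.mk0 z hz0), ?_, ?_⟩).symm
    · rw [GeneralLinearGroup.center_eq_range_scalar]; exact ⟨_, rfl⟩
    · ext i j
      simp [s, mul_comm]
      rfl
  have hψ : Function.Surjective ψ := by
    rintro ⟨q, hq⟩
    obtain ⟨s, rfl⟩ := hφs q
    exact ⟨⟨s, hq⟩, rfl⟩
  refine ⟨A.map ψ, hAn.map ψ hψ, ?_, ?_⟩
  · refine le_trans (Nat.le_of_dvd ?_ (A.index_map_dvd hψ)) hAi
    exact Nat.pos_of_ne_zero Subgroup.index_ne_zero_of_finite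
  · obtain ⟨b, χ, hb⟩ := jordan_joint_diag n (fun a : A => ρ a.1)
      (fun x y => by
        have h1 : Commute x.1 y.1 := hAc x.1 x.2 y.1 y.2
        exact h1.map ρ)
      (fun x => ⟨orderOf x.1, orderOf_pos x.1, by rw [← map_pow, pow_orderOf_eq_one, map_one]⟩)
    let e : Matrix (Fin n) (Fin n) ℂ := (Pi.basisFun ℂ (Fin n)).toMatrix b
    let P : GL (Fin n) ℂ := ⟨e, b.toMatrix (Pi.basisFun ℂ (Fin n)),
      Module.Basis.toMatrix_mul_toMatrix_flip _ _, Module.Basis.toMatrix_mul_toMatrix_flip _ _⟩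
    have hPcol : ∀ i j, P.1 i j = b j i := by
      intro i j
      simp [P, e, Module.Basis.toMatrix_apply]
    refine ⟨P, fun g hg => ?_⟩
    obtain ⟨_, ⟨k, hk, rfl⟩, hkg⟩ := hg
    have hkg' : π (SpecialLinearGroup.toGL k.1) = π g := hkg
    obtain ⟨w, hw, hwg⟩ := (QuotientGroup.mk'_eq_mk' _).mp hkg'
    rw [GeneralLinearGroup.center_eq_range_scalar] at hw
    obtain ⟨z, rfl⟩ := hw
    have hgM : g.1 = z.1 • ρ k := by
      rw [← hwg]
      ext i j
      simp [ρ, mul_comm]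
    have hgP : g.1 * P.1 = P.1 * diagonal (fun j => z.1 * χ j ⟨k, hk⟩) := by
      ext i j
      rw [mul_diagonal, hgM, hPcol]
      have h1 := congrFun (hb ⟨k, hk⟩ j) i
      simp only [Pi.smul_apply, smul_eq_mul] at h1
      rw [smul_mul, Matrix.smul_apply, mul_apply]
      simp only [hPcol]
      simp only [mulVec, dotProduct] at h1
      rw [h1, smul_eq_mul]; ring
    have : ((P⁻¹ * g * P : GL (Fin n) ℂ) : Matrix (Fin n) (Fin n) ℂ)
        = diagonal (fun j => z.1 * χ j ⟨k, hk⟩) := by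
      rw [Units.val_mul, Units.val_mul, mul_assoc, hgP, ← mul_assoc, ← Units.val_mul]
      simp
    rw [this]
    exact isDiag_diagonal _
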